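/- Let H^m(z) = z^{m−1}/(m−1)! 1_{z≥0} for m ≥ 1 and define the GUE-minor kernel K^{minor}(n, x; n', x') = −1_{n>n'} 2^{n−n'} H^{n−n'}(x−x') + (2/(2πi)²) ∮_{Γ_0} dz ∫_L dw/(w−z) · e^{−z²+2zx} e^{w²−2wx'} w^{n'} z^{−n}, where Γ_0 is a small circle around 0 and L is a vertical line to the right of Γ_0. Then the tacnode GUE-minor kernel K^tac_{β,ρ}(u1,y1;u2,y2), defined as K^{minor}(u1, β−y1; u2, β−y2) plus 2⟨(1 − K^β)^{-1}_{≥−ρ} A^{β,y1−β}_{u1}, B^{β,y2−β}_{u2}⟩_{≥−ρ} with A, B, K^β given by explicit double contour integrals, is invariant under the involution (u1, y1, u2, y2) ↦ (ρ−u2, −y2, ρ−u1, −y1). -/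

import Mathlib

open Complex

/-- `H^m(z) = z^{m−1}/(m−1)! · 1_{z≥0}` (for `m ≥ 1`). -/
noncomputable def Hm (m : ℤ) (z : ℝ) : ℝ :=
  if 0 ≤ z then z ^ (m - 1).toNat / (Nat.factorial (m - 1).toNat : ℝ) else 0

/-- Integral over the upward vertical line `L = c + iℝ`. -/
noncomputable def lineInt (c : ℝ) (f : ℂ → ℂ) : ℂ :=
  ∫ s : ℝ, f ((c : ℂ) + (s : ℝ) * I) * I

/-- The GUE-minor kernel `K^minor(n,x;n',x')`, with `Γ₀` the circle of radius `r0` around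
`0` and `L` the vertical line `Re = c` to its right. -/
noncomputable def Kminor (r0 c : ℝ) (n n' : ℤ) (x x' : ℝ) : ℂ :=
  -(if n' < n then (1 : ℂ) else 0) * 2 ^ (n - n') * ((Hm (n - n') (x - x') : ℝ) : ℂ)
  + 2 / (2 * Real.pi * I) ^ 2 *
      ∮ z in C(0, r0), lineInt c (fun w =>
        (w - z)⁻¹ * (Complex.exp (-z ^ 2 + 2 * z * (x : ℂ))
          / Complex.exp (-w ^ 2 + 2 * w * (x' : ℂ))) * w ^ n' / z ^ n)

/-- The kernel `K^β(λ,κ)`. -/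
noncomputable def Kbeta (r0 c β : ℝ) (lam κ : ℤ) : ℂ :=
  ((2 * Real.pi * I) ^ 2)⁻¹ *
    ∮ ζ in C(0, r0), lineInt c (fun ω =>
      (ω - ζ)⁻¹ * (Complex.exp (-2 * ζ ^ 2 + 4 * (β : ℂ) * ζ)
        / Complex.exp (-2 * ω ^ 2 + 4 * (β : ℂ) * ω)) * ζ ^ κ / ω ^ (lam + 1))

/-- The function `𝒜^{β,y}_v(κ)`. -/
noncomputable def calA (r0 c β y : ℝ) (v κ : ℤ) : ℂ :=
  ((2 * Real.pi * I) ^ 2)⁻¹ *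
    (∮ ζ in C(0, r0), lineInt c (fun ω =>
      (ζ - ω)⁻¹ * (Complex.exp (-ζ ^ 2 - 2 * (y : ℂ) * ζ)
        / Complex.exp (-2 * ω ^ 2 + 4 * (β : ℂ) * ω)) * ζ ^ (-v) / ω ^ (κ + 1)))
  + (2 * Real.pi * I)⁻¹ *
      lineInt c (fun ζ =>
        Complex.exp (ζ ^ 2 - 2 * ζ * ((y : ℂ) + 2 * (β : ℂ))) / ζ ^ (v + κ + 1))

/-- The function `ℬ^{β,y}_u(λ)`. -/
noncomputable def calB (r0 c β y : ℝ) (u lam : ℤ) : ℂ :=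
  ((2 * Real.pi * I) ^ 2)⁻¹ *
    (∮ ζ in C(0, r0), lineInt c (fun ω =>
      (ζ - ω)⁻¹ * (Complex.exp (-2 * ζ ^ 2 + 4 * ζ * (β : ℂ))
        / Complex.exp (-ω ^ 2 - 2 * ω * (y : ℂ))) * ζ ^ lam * ω ^ u))
  + (2 * Real.pi * I)⁻¹ *
      ∮ ω in C(0, r0),
        ω ^ (u + lam) / Complex.exp (ω ^ 2 - 2 * ω * ((y : ℂ) + 2 * (β : ℂ)))

/-- The tacnode GUE-minor kernel `K^tac_{β,ρ}`, where `R` is the resolvent kernel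
`(1 − K^β)⁻¹` on `ℓ²({−ρ, −ρ+1, …})` and the perturbation term is the inner product
`2⟨(1−K^β)⁻¹_{≥−ρ} 𝒜^{β,y₁−β}_{u₁}, ℬ^{β,y₂−β}_{u₂}⟩_{≥−ρ}`. -/
noncomputable def Ktac (r0 c β : ℝ) (ρ : ℤ) (R : ℤ → ℤ → ℂ)
    (u1 : ℤ) (y1 : ℝ) (u2 : ℤ) (y2 : ℝ) : ℂ :=
  Kminor r0 c u1 u2 (β - y1) (β - y2)
  + 2 * ∑' (lam : {j : ℤ // -ρ ≤ j}) (κ : {j : ℤ // -ρ ≤ j}),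
      R (lam : ℤ) (κ : ℤ) * calA r0 c β (y1 - β) u1 (κ : ℤ) * calB r0 c β (y2 - β) u2 (lam : ℤ)

open MeasureTheory

/-- Moments of a Gaussian exponential on the circle. -/
noncomputable def circM (r0 : ℝ) (p q : ℂ) (k : ℤ) : ℂ :=
  ∮ z in C(0, r0), Complex.exp (p * z ^ 2 + q * z) * z ^ k

/-- Moments of a Gaussian exponential on the vertical line. -/
noncomputable def lineM (c : ℝ) (p q : ℂ) (k : ℤ) : ℂ :=
  lineInt c (fun w => Complex.exp (p * w ^ 2 + q * w) * w ^ k)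

/-- The double integral with a Cauchy kernel. -/
noncomputable def dblM (r0 c : ℝ) (p q : ℂ) (k : ℤ) (p' q' : ℂ) (k' : ℤ) : ℂ :=
  ∮ z in C(0, r0), lineInt c (fun w => (w - z)⁻¹ *
    ((Complex.exp (p * z ^ 2 + q * z) * z ^ k) * (Complex.exp (p' * w ^ 2 + q' * w) * w ^ k')))

lemma line_ne {c : ℝ} (hc : 0 < c) (s : ℝ) : (c : ℂ) + (s : ℝ) * I ≠ 0 := by
  intro h
  have := congrArg Complex.re h
  simp at this
  exact hc.ne' this

lemma line_norm {c : ℝ} (s : ℝ) : c ≤ ‖(c : ℂ) + (s : ℝ) * I‖ := by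
  have := Complex.re_le_norm ((c : ℂ) + (s : ℝ) * I)
  simpa using this

lemma line_cont {c : ℝ} (hc : 0 < c) (p q : ℂ) (k : ℤ) :
    Continuous (fun s : ℝ => Complex.exp (p * ((c : ℂ) + (s : ℝ) * I) ^ 2
      + q * ((c : ℂ) + (s : ℝ) * I)) * ((c : ℂ) + (s : ℝ) * I) ^ k) := by
  refine Continuous.mul (by fun_prop) ?_
  exact Continuous.zpow₀ (by fun_prop) k (fun s => Or.inl (line_ne hc s))

lemma line_int0 (c : ℝ) (p q e : ℂ) (hp : 0 < p.re) :
    Integrable (fun s : ℝ => Complex.exp (p * ((c : ℂ) + (s : ℝ) * I) ^ 2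
      + q * ((c : ℂ) + (s : ℝ) * I) + e * s)) := by
  have := integrable_cexp_quadratic hp (2 * c * p * I + q * I + e) (p * c ^ 2 + q * c)
  refine this.congr (Filter.Eventually.of_forall fun s => ?_)
  simp only
  congr 1
  linear_combination (-p * s ^ 2) * I_sq

lemma line_int {c : ℝ} (hc : 0 < c) (p q : ℂ) (hp : 0 < p.re) (k : ℤ) :
    Integrable (fun s : ℝ => Complex.exp (p * ((c : ℂ) + (s : ℝ) * I) ^ 2
      + q * ((c : ℂ) + (s : ℝ) * I)) * ((c : ℂ) + (s : ℝ) * I) ^ k) := by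
  have h1 := line_int0 c p q 1 hp
  have h2 := line_int0 c p q (-1) hp
  have h3 := line_int0 c p q 0 hp
  obtain ⟨n, rfl | rfl⟩ := k.eq_nat_or_neg
  · refine Integrable.mono' ((h1.norm.add h2.norm).const_mul (n.factorial * Real.exp c))
      (line_cont hc p q n).aestronglyMeasurable (Filter.Eventually.of_forall fun s => ?_)
    simp only [norm_mul, zpow_natCast, norm_pow, Pi.add_apply, Complex.exp_add _ (_ * (s : ℂ))]
    have hb : ‖(c : ℂ) + (s : ℝ) * I‖ ≤ c + |s| := by
      refine (norm_add_le _ _).trans ?_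
      simp [abs_of_pos hc]
    have hx := Real.pow_div_factorial_le_exp _ (norm_nonneg ((c : ℂ) + (s : ℝ) * I)) n
    rw [div_le_iff₀ (by positivity)] at hx
    have he : Real.exp ‖(c : ℂ) + (s : ℝ) * I‖ ≤ Real.exp c * (Real.exp s + Real.exp (-s)) := by
      refine (Real.exp_le_exp.2 hb).trans ?_
      rw [Real.exp_add]
      gcongr
      rcases abs_cases s with ⟨h, _⟩ | ⟨h, _⟩ <;> rw [h]
      · linarith [Real.exp_pos (-s)]
      · linarith [Real.exp_pos s]
    have e1 : ‖Complex.exp (1 * (s : ℂ))‖ = Real.exp s := by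
      rw [Complex.norm_exp]; simp
    have e2 : ‖Complex.exp (-1 * (s : ℂ))‖ = Real.exp (-s) := by
      rw [Complex.norm_exp]; simp
    rw [e1, e2]
    set G := ‖Complex.exp (p * ((c : ℂ) + (s : ℝ) * I) ^ 2 + q * ((c : ℂ) + (s : ℝ) * I))‖
    have hG : 0 ≤ G := norm_nonneg _
    calc G * ‖(c : ℂ) + (s : ℝ) * I‖ ^ n
        ≤ G * (Real.exp c * (Real.exp s + Real.exp (-s)) * n.factorial) := by
          gcongr
          exact hx.trans (by gcongr)
      _ = _ := by ring
  · have hcont := line_cont hc 0 0 (-n)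
    simp only [zero_mul, add_zero, Complex.exp_zero, one_mul] at hcont
    refine Integrable.mul_bdd (c := (c ^ n)⁻¹) ?_ hcont.aestronglyMeasurable
      (Filter.Eventually.of_forall fun s => ?_)
    · simpa using h3
    · rw [zpow_neg, norm_inv, zpow_natCast, norm_pow]
      have := line_norm (c := c) s
      gcongr

lemma circM_zero {r0 : ℝ} (h0 : 0 < r0) (p q : ℂ) (k : ℤ) (hk : 0 ≤ k) :
    circM r0 p q k = 0 := by
  lift k to ℕ using hk
  unfold circM
  refine DiffContOnCl.circleIntegral_eq_zero h0.le (Differentiable.diffContOnCl ?_)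
  simp only [zpow_natCast]
  fun_prop

lemma circ_cont {r0 : ℝ} (h0 : 0 < r0) (p q : ℂ) (k : ℤ) :
    ContinuousOn (fun z : ℂ => Complex.exp (p * z ^ 2 + q * z) * z ^ k) (Metric.sphere 0 r0) := by
  refine ContinuousOn.mul (by fun_prop) ?_
  refine ContinuousOn.zpow₀ continuousOn_id k (fun z hz => Or.inl ?_)
  rintro rfl
  simp at hz
  exact h0.ne hz

lemma inner_circ_sum {r0 : ℝ} (h0 : 0 < r0) (p q : ℂ) (N : ℕ) : ∀ (k : ℤ), 0 ≤ k + N →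
    ∀ w : ℂ, r0 < ‖w‖ →
    (∮ z in C(0, r0), (w - z)⁻¹ * (Complex.exp (p * z ^ 2 + q * z) * z ^ k))
      = ∑ m ∈ Finset.range N, circM r0 p q (k + m) * w ^ (-(m : ℤ) - 1) := by
  induction N with
  | zero =>
    intro k hk w hw
    simp only [Nat.cast_zero, add_zero] at hk
    lift k to ℕ using hk
    simp only [Finset.range_zero, Finset.sum_empty, zpow_natCast]
    have hne : ∀ z ∈ Metric.closedBall (0 : ℂ) r0, w - z ≠ 0 := by
      intro z hz h
      rw [sub_eq_zero] at h
      simp [← h] at hz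
      linarith
    refine circleIntegral_eq_zero_of_differentiable_on_off_countable h0.le
      Set.countable_empty ?_ ?_
    · refine ContinuousOn.mul (ContinuousOn.inv₀ (by fun_prop) hne) (by fun_prop)
    · intro z hz
      refine DifferentiableAt.mul (DifferentiableAt.inv (by fun_prop)
        (hne z (Metric.ball_subset_closedBall hz.1))) (by fun_prop)
  | succ N ih =>
    intro k hk w hw
    have hw0 : w ≠ 0 := by
      rintro rfl
      simp at hw
      linarith
    have hne : ∀ z ∈ Metric.sphere (0 : ℂ) r0, w - z ≠ 0 := by
      intro z hz h
      rw [sub_eq_zero] at h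
      simp [← h] at hz
      linarith
    have hz0 : ∀ z ∈ Metric.sphere (0 : ℂ) r0, z ≠ 0 := by
      rintro z hz rfl
      simp at hz
      linarith
    have key : (∮ z in C(0, r0), (w - z)⁻¹ * (Complex.exp (p * z ^ 2 + q * z) * z ^ k))
        = ∮ z in C(0, r0), (w⁻¹ * (Complex.exp (p * z ^ 2 + q * z) * z ^ k)
          + w⁻¹ * ((w - z)⁻¹ * (Complex.exp (p * z ^ 2 + q * z) * z ^ (k + 1)))) := by
      refine circleIntegral.integral_congr h0.le fun z hz => ?_
      have h1 := hne z hz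
      rw [zpow_add_one₀ (hz0 z hz)]
      field_simp
      ring
    have hi1 : CircleIntegrable
        (fun z : ℂ => w⁻¹ * (Complex.exp (p * z ^ 2 + q * z) * z ^ k)) 0 r0 :=
      (continuousOn_const.mul (circ_cont h0 p q k)).circleIntegrable h0.le
    have hi2 : CircleIntegrable
        (fun z : ℂ => w⁻¹ * ((w - z)⁻¹ * (Complex.exp (p * z ^ 2 + q * z) * z ^ (k + 1)))) 0 r0 :=
      (continuousOn_const.mul ((ContinuousOn.inv₀ (by fun_prop) hne).mul
        (circ_cont h0 p q (k + 1)))).circleIntegrable h0.le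
    rw [key, circleIntegral.integral_add hi1 hi2, circleIntegral.integral_const_mul,
      circleIntegral.integral_const_mul, ih (k + 1) (by push_cast at hk; linarith) w hw,
      Finset.sum_range_succ', Finset.mul_sum, add_comm]
    congr 1
    · refine Finset.sum_congr rfl fun m _ => ?_
      have e1 : k + ((m + 1 : ℕ) : ℤ) = k + 1 + m := by push_cast; ring
      have e2 : -((m + 1 : ℕ) : ℤ) - 1 = (-(m : ℤ) - 1) - 1 := by push_cast; ring
      rw [e1, e2, zpow_sub_one₀ hw0 (-(m : ℤ) - 1), mul_left_comm, mul_comm w⁻¹]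
    · simp [circM]
      ring

lemma dbl_sum {r0 c : ℝ} (h0 : 0 < r0) (hrc : r0 < c) (p q p' q' : ℂ) (hp : 0 < p'.re)
    (k k' : ℤ) (N : ℕ) (hN : 0 ≤ k + N) :
    dblM r0 c p q k p' q' k'
      = ∑ m ∈ Finset.range N, circM r0 p q (k + m) * lineM c p' q' (k' - m - 1) := by
  have hc : 0 < c := h0.trans hrc
  unfold dblM lineInt circleIntegral
  have hmem : ∀ θ, circleMap 0 r0 θ ∈ Metric.sphere (0 : ℂ) r0 :=
    fun θ => circleMap_mem_sphere 0 h0.le θ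
  have hdist : ∀ θ s : ℝ, c - r0 ≤ ‖(c : ℂ) + (s : ℝ) * I - circleMap 0 r0 θ‖ := by
    intro θ s
    have h1 := line_norm (c := c) s
    have h2 : ‖circleMap 0 r0 θ‖ = r0 := by simpa using hmem θ
    have h3 := norm_sub_norm_le ((c : ℂ) + (s : ℝ) * I) (circleMap 0 r0 θ)
    linarith
  set F : ℝ → ℂ := fun θ => deriv (circleMap 0 r0) θ *
    (Complex.exp (p * circleMap 0 r0 θ ^ 2 + q * circleMap 0 r0 θ) * circleMap 0 r0 θ ^ k) with hF
  set H : ℝ → ℂ := fun s => Complex.exp (p' * ((c : ℂ) + (s : ℝ) * I) ^ 2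
      + q' * ((c : ℂ) + (s : ℝ) * I)) * ((c : ℂ) + (s : ℝ) * I) ^ k' with hH
  have hFc : Continuous F := by
    rw [hF]
    refine Continuous.mul ?_ ((circ_cont h0 p q k).comp_continuous (continuous_circleMap 0 r0) hmem)
    have hd : deriv (circleMap 0 r0) = fun θ => circleMap 0 r0 θ * I :=
      funext fun θ => deriv_circleMap 0 r0 θ
    rw [hd]
    fun_prop
  have hHi : Integrable H := line_int hc p' q' hp k'
  have hFi : Integrable F (volume.restrict (Set.uIoc 0 (2 * Real.pi))) :=
    (hFc.integrableOn_uIcc).mono_set Set.uIoc_subset_uIcc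
  have hint : Integrable (Function.uncurry fun θ s : ℝ =>
      ((c : ℂ) + (s : ℝ) * I - circleMap 0 r0 θ)⁻¹ * (F θ * (H s * I)))
      ((volume.restrict (Set.uIoc 0 (2 * Real.pi))).prod volume) := by
    refine Integrable.bdd_mul (c := (c - r0)⁻¹) (hFi.mul_prod (hHi.mul_const I)) ?_ ?_
    · refine Continuous.aestronglyMeasurable (Continuous.inv₀ (by fun_prop) ?_)
      rintro ⟨θ, s⟩ h
      have := hdist θ s
      simp only at h
      rw [h, norm_zero] at this
      linarith
    · refine Filter.Eventually.of_forall ?_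
      rintro ⟨θ, s⟩
      simp only [norm_inv]
      have := hdist θ s
      have h' : 0 < c - r0 := by linarith
      gcongr
  calc _ = ∫ θ in (0 : ℝ)..2 * Real.pi, ∫ s : ℝ,
        ((c : ℂ) + (s : ℝ) * I - circleMap 0 r0 θ)⁻¹ * (F θ * (H s * I)) := by
        refine intervalIntegral.integral_congr fun θ _ => ?_
        simp only [smul_eq_mul]
        rw [← MeasureTheory.integral_const_mul]
        congr 1
        funext s
        simp only [hF, hH]
        ring
    _ = ∫ s : ℝ, ∫ θ in (0 : ℝ)..2 * Real.pi,
        ((c : ℂ) + (s : ℝ) * I - circleMap 0 r0 θ)⁻¹ * (F θ * (H s * I)) :=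
        intervalIntegral_integral_swap hint
    _ = ∫ s : ℝ, ∑ m ∈ Finset.range N, circM r0 p q (k + m) *
          ((Complex.exp (p' * ((c : ℂ) + (s : ℝ) * I) ^ 2
      + q' * ((c : ℂ) + (s : ℝ) * I)) * ((c : ℂ) + (s : ℝ) * I) ^ (k' - m - 1)) * I) := by
        congr 1
        funext s
        have hs := inner_circ_sum h0 p q N k hN ((c : ℂ) + (s : ℝ) * I)
          (hrc.trans_le (line_norm s))
        have : (∫ θ in (0 : ℝ)..2 * Real.pi,
            ((c : ℂ) + (s : ℝ) * I - circleMap 0 r0 θ)⁻¹ * (F θ * (H s * I)))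
            = (∮ z in C(0, r0), ((c : ℂ) + (s : ℝ) * I - z)⁻¹ *
              (Complex.exp (p * z ^ 2 + q * z) * z ^ k)) * (H s * I) := by
          unfold circleIntegral
          rw [← intervalIntegral.integral_mul_const]
          refine intervalIntegral.integral_congr fun θ _ => ?_
          simp only [hF, smul_eq_mul]
          ring
        rw [this, hs, Finset.sum_mul]
        refine Finset.sum_congr rfl fun m _ => ?_
        have e : k' - (m : ℤ) - 1 = k' + (-(m : ℤ) - 1) := by ring
        rw [e, zpow_add₀ (line_ne hc s)]
        simp only [hH]
        ring
    _ = _ := by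
        rw [integral_finsetSum]
        · refine Finset.sum_congr rfl fun m _ => ?_
          rw [MeasureTheory.integral_const_mul]
          rfl
        · intro m _
          exact ((line_int hc p' q' hp _).mul_const I).const_mul _

lemma circ_neg (f : ℂ → ℂ) (r0 : ℝ) :
    (∮ z in C(0, r0), -f z) = -∮ z in C(0, r0), f z := by
  simp [circleIntegral]

lemma Kminor_eq (r0 c : ℝ) (h0 : 0 < r0) (hrc : r0 < c) (n n' : ℤ) (x x' : ℝ) (N : ℕ)
    (hN : 0 ≤ -n + N) :
    Kminor r0 c n n' x x' =
      -(if n' < n then (1 : ℂ) else 0) * 2 ^ (n - n') * ((Hm (n - n') (x - x') : ℝ) : ℂ)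
      + 2 * ∑ m : Fin N, ((2 * Real.pi * I)⁻¹ * circM r0 (-1) (2 * x) (-n + (m : ℕ))) *
        ((2 * Real.pi * I)⁻¹ * lineM c 1 (-2 * x') (n' - (m : ℕ) - 1)) := by
  have h : (∮ z in C(0, r0), lineInt c (fun w =>
        (w - z)⁻¹ * (Complex.exp (-z ^ 2 + 2 * z * (x : ℂ))
          / Complex.exp (-w ^ 2 + 2 * w * (x' : ℂ))) * w ^ n' / z ^ n))
      = dblM r0 c (-1) (2 * x) (-n) 1 (-2 * x') n' := by
    unfold dblM
    congr 1; funext z; congr 1; funext w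
    rw [div_eq_mul_inv (Complex.exp _), ← Complex.exp_neg, zpow_neg]
    ring_nf
  unfold Kminor
  rw [h, dbl_sum h0 hrc _ _ _ _ (by simp) _ _ N hN, Finset.sum_range, Finset.mul_sum,
    Finset.mul_sum]
  congr 1
  refine Finset.sum_congr rfl fun m _ => ?_
  ring

lemma Kbeta_eq (r0 c β : ℝ) (h0 : 0 < r0) (hrc : r0 < c) (lam κ : ℤ) (N : ℕ)
    (hN : 0 ≤ κ + N) :
    Kbeta r0 c β lam κ = ∑ m : Fin N,
      ((2 * Real.pi * I)⁻¹ * lineM c 2 (-4 * β) (-lam - 1 - (m : ℕ) - 1)) *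
      ((2 * Real.pi * I)⁻¹ * circM r0 (-2) (4 * β) (κ + (m : ℕ))) := by
  have h : (∮ ζ in C(0, r0), lineInt c (fun ω =>
      (ω - ζ)⁻¹ * (Complex.exp (-2 * ζ ^ 2 + 4 * (β : ℂ) * ζ)
        / Complex.exp (-2 * ω ^ 2 + 4 * (β : ℂ) * ω)) * ζ ^ κ / ω ^ (lam + 1)))
      = dblM r0 c (-2) (4 * β) κ 2 (-4 * β) (-lam - 1) := by
    unfold dblM
    congr 1; funext z; congr 1; funext w
    rw [div_eq_mul_inv (Complex.exp _), ← Complex.exp_neg,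
      show -lam - 1 = -(lam + 1) by ring, zpow_neg]
    ring_nf
  unfold Kbeta
  rw [h, dbl_sum h0 hrc _ _ _ _ (by simp) _ _ N hN, Finset.sum_range, Finset.mul_sum]
  refine Finset.sum_congr rfl fun m _ => ?_
  ring

lemma calA_eq (r0 c β y : ℝ) (h0 : 0 < r0) (hrc : r0 < c) (v κ : ℤ) (N : ℕ)
    (hN : 0 ≤ -v + N) :
    calA r0 c β y v κ =
      (2 * Real.pi * I)⁻¹ * lineM c 1 (-2 * (y + 2 * β)) (-v - κ - 1)
      - ∑ m : Fin N,
        ((2 * Real.pi * I)⁻¹ * lineM c 2 (-4 * β) (-κ - 1 - (m : ℕ) - 1)) *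
        ((2 * Real.pi * I)⁻¹ * circM r0 (-1) (-2 * y) (-v + (m : ℕ))) := by
  have h : (∮ ζ in C(0, r0), lineInt c (fun ω =>
      (ζ - ω)⁻¹ * (Complex.exp (-ζ ^ 2 - 2 * (y : ℂ) * ζ)
        / Complex.exp (-2 * ω ^ 2 + 4 * (β : ℂ) * ω)) * ζ ^ (-v) / ω ^ (κ + 1)))
      = - dblM r0 c (-1) (-2 * y) (-v) 2 (-4 * β) (-κ - 1) := by
    unfold dblM
    rw [← circ_neg]
    congr 1; funext z
    unfold lineInt
    rw [← MeasureTheory.integral_neg]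
    congr 1; funext s
    beta_reduce
    generalize (c : ℂ) + (s : ℝ) * I = w
    rw [div_eq_mul_inv (Complex.exp _), ← Complex.exp_neg,
      show -κ - 1 = -(κ + 1) by ring, zpow_neg _ (κ + 1), ← neg_sub w z, inv_neg]
    ring_nf
  have h2 : lineInt c (fun ζ =>
        Complex.exp (ζ ^ 2 - 2 * ζ * ((y : ℂ) + 2 * (β : ℂ))) / ζ ^ (v + κ + 1))
      = lineM c 1 (-2 * (y + 2 * β)) (-v - κ - 1) := by
    unfold lineM
    congr 1; funext w
    rw [show -v - κ - 1 = -(v + κ + 1) by ring, zpow_neg]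
    ring_nf
  unfold calA
  rw [h, h2, dbl_sum h0 hrc _ _ _ _ (by simp) _ _ N hN, Finset.sum_range, mul_neg,
    Finset.mul_sum, neg_add_eq_sub]
  congr 1
  refine Finset.sum_congr rfl fun m _ => ?_
  ring

lemma calB_eq (r0 c β y : ℝ) (h0 : 0 < r0) (hrc : r0 < c) (u lam : ℤ) (N : ℕ)
    (hN : 0 ≤ lam + N) :
    calB r0 c β y u lam =
      (2 * Real.pi * I)⁻¹ * circM r0 (-1) (2 * (y + 2 * β)) (u + lam)
      - ∑ m : Fin N,
        ((2 * Real.pi * I)⁻¹ * circM r0 (-2) (4 * β) (lam + (m : ℕ))) *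
        ((2 * Real.pi * I)⁻¹ * lineM c 1 (2 * y) (u - (m : ℕ) - 1)) := by
  have h : (∮ ζ in C(0, r0), lineInt c (fun ω =>
      (ζ - ω)⁻¹ * (Complex.exp (-2 * ζ ^ 2 + 4 * ζ * (β : ℂ))
        / Complex.exp (-ω ^ 2 - 2 * ω * (y : ℂ))) * ζ ^ lam * ω ^ u))
      = - dblM r0 c (-2) (4 * β) lam 1 (2 * y) u := by
    unfold dblM
    rw [← circ_neg]
    congr 1; funext z
    unfold lineInt
    rw [← MeasureTheory.integral_neg]
    congr 1; funext s
    beta_reduce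
    generalize (c : ℂ) + (s : ℝ) * I = w
    rw [div_eq_mul_inv (Complex.exp _), ← Complex.exp_neg, ← neg_sub w z, inv_neg]
    ring_nf
  have h2 : (∮ ω in C(0, r0),
        ω ^ (u + lam) / Complex.exp (ω ^ 2 - 2 * ω * ((y : ℂ) + 2 * (β : ℂ))))
      = circM r0 (-1) (2 * (y + 2 * β)) (u + lam) := by
    unfold circM
    congr 1; funext w
    rw [div_eq_mul_inv, ← Complex.exp_neg]
    ring_nf
  unfold calB
  rw [h, h2, dbl_sum h0 hrc _ _ _ _ (by simp) _ _ N hN, Finset.sum_range, mul_neg,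
    Finset.mul_sum, neg_add_eq_sub]
  congr 1
  refine Finset.sum_congr rfl fun m _ => ?_
  ring

open Matrix in
/-- The finite dimensional identity behind the involution. -/
lemma mat_identity {n : Type*} [Fintype n] [DecidableEq n] (Φ Ψ R : Matrix n n ℂ)
    (hΦ : Φᵀ = Φ) (hΨ : Ψᵀ = Ψ) (hR : (1 - Ψ * Φ) * R = 1) (a b a' b' : n → ℂ) :
    a ⬝ᵥ b + (a' - Φ *ᵥ b) ⬝ᵥ (R *ᵥ (b' - Ψ *ᵥ a))
      = a' ⬝ᵥ b' + (a - Φ *ᵥ b') ⬝ᵥ (R *ᵥ (b - Ψ *ᵥ a')) := by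
  have hR2 : R * (1 - Ψ * Φ) = 1 := mul_eq_one_comm.1 hR
  have hT1 : (1 - Φ * Ψ) * Rᵀ = 1 := by
    have := congrArg transpose hR2
    simpa [transpose_mul, transpose_sub, hΦ, hΨ] using this
  have hT2 : Rᵀ * (1 - Φ * Ψ) = 1 := mul_eq_one_comm.1 hT1
  have e1 : Φ * R = Rᵀ * Φ := by
    calc Φ * R = (Rᵀ * (1 - Φ * Ψ)) * (Φ * R) := by rw [hT2, one_mul]
      _ = Rᵀ * Φ * ((1 - Ψ * Φ) * R) := by noncomm_ring
      _ = Rᵀ * Φ := by rw [hR, mul_one]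
  have e2 : R * Ψ = Ψ * Rᵀ := by
    calc R * Ψ = R * Ψ * ((1 - Φ * Ψ) * Rᵀ) := by rw [hT1, mul_one]
      _ = (R * (1 - Ψ * Φ)) * (Ψ * Rᵀ) := by noncomm_ring
      _ = Ψ * Rᵀ := by rw [hR2, one_mul]
  have e3 : Φ * R * Ψ = Rᵀ - 1 := by
    rw [e1, Matrix.mul_assoc]
    have : Rᵀ - Rᵀ * (Φ * Ψ) = 1 := by rw [← hT2]; noncomm_ring
    rw [← this]; abel
  have gen : ∀ a b a' b' : n → ℂ,
      a ⬝ᵥ b + (a' - Φ *ᵥ b) ⬝ᵥ (R *ᵥ (b' - Ψ *ᵥ a))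
      = a' ⬝ᵥ (R *ᵥ b') + a ⬝ᵥ (R *ᵥ b) - a' ⬝ᵥ ((R * Ψ) *ᵥ a) - b ⬝ᵥ ((Φ * R) *ᵥ b') := by
    intro a b a' b'
    have f1 : ∀ v, (Φ *ᵥ b) ⬝ᵥ v = b ⬝ᵥ (Φ *ᵥ v) := by
      intro v
      rw [dotProduct_mulVec, ← mulVec_transpose, hΦ]
    have f2 : b ⬝ᵥ (Φ *ᵥ (R *ᵥ (Ψ *ᵥ a))) = a ⬝ᵥ (R *ᵥ b) - a ⬝ᵥ b := by
      rw [mulVec_mulVec, mulVec_mulVec, e3, sub_mulVec, dotProduct_sub,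
        one_mulVec, mulVec_transpose, dotProduct_comm b, ← dotProduct_mulVec, dotProduct_comm b a]
    rw [sub_dotProduct, mulVec_sub, dotProduct_sub, f1, mulVec_sub, dotProduct_sub, f2,
      mulVec_mulVec, mulVec_mulVec]
    ring
  rw [gen a b a' b', gen a' b' a b]
  have s1 : a' ⬝ᵥ ((R * Ψ) *ᵥ a) = a ⬝ᵥ ((R * Ψ) *ᵥ a') := by
    have : (R * Ψ)ᵀ = R * Ψ := by rw [transpose_mul, hΨ, e2]
    rw [dotProduct_mulVec, ← mulVec_transpose, this, dotProduct_comm]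
  have s2 : b ⬝ᵥ ((Φ * R) *ᵥ b') = b' ⬝ᵥ ((Φ * R) *ᵥ b) := by
    have : (Φ * R)ᵀ = Φ * R := by rw [transpose_mul, hΦ, e1]
    rw [dotProduct_mulVec, ← mulVec_transpose, this, dotProduct_comm]
  rw [s1, s2]
  ring

lemma tsum_shift (ρ : ℤ) (f : ℤ → ℂ) (N : ℕ) (hf : ∀ i : ℕ, N ≤ i → f (-ρ + i) = 0) :
    ∑' j : {j : ℤ // -ρ ≤ j}, f (j : ℤ) = ∑ i : Fin N, f (-ρ + (i : ℕ)) := by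
  let e : ℕ ≃ {j : ℤ // -ρ ≤ j} :=
    { toFun := fun i => ⟨-ρ + i, by omega⟩
      invFun := fun j => ((j : ℤ) + ρ).toNat
      left_inv := fun i => by simp
      right_inv := fun j => by
        have := j.2
        ext
        simp only
        omega }
  rw [← e.tsum_eq, tsum_eq_sum (s := Finset.range N), Finset.sum_range]
  · rfl
  · intro i hi
    exact hf i (by simpa using hi)

open Matrix in
/-- The resolvent vanishes off the truncated block, and the truncated block inverts. -/
lemma Ktac_eq (r0 c β : ℝ) (h0 : 0 < r0) (hrc : r0 < c) (ρ : ℤ)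
    (R : ℤ → ℤ → ℂ)
    (hres : ∀ lam κ : ℤ, -ρ ≤ lam → -ρ ≤ κ →
      R lam κ - ∑' j : {j : ℤ // -ρ ≤ j}, Kbeta r0 c β lam (j : ℤ) * R (j : ℤ) κ
        = if lam = κ then 1 else 0) (N : ℕ) (hN : 0 ≤ -ρ + N)
    (Φ Ψ R' : Matrix (Fin N) (Fin N) ℂ)
    (hΦ : Φ = of fun i j : Fin N => (2 * Real.pi * I)⁻¹ *
      circM r0 (-2) (4 * β) (-ρ + (i : ℕ) + (j : ℕ)))
    (hΨ : Ψ = of fun i j : Fin N => (2 * Real.pi * I)⁻¹ *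
      lineM c 2 (-4 * β) (ρ - (i : ℕ) - (j : ℕ) - 2))
    (hR' : R' = of fun i j : Fin N => R (-ρ + (i : ℕ)) (-ρ + (j : ℕ))) :
    (1 - Ψ * Φ) * R' = 1 ∧
    ∀ (u1 u2 : ℤ) (y1 y2 : ℝ) (_ : 0 ≤ -u1 + N) (_ : 0 ≤ u2 - ρ + N),
    Ktac r0 c β ρ R u1 y1 u2 y2 =
      -(if u2 < u1 then (1 : ℂ) else 0) * 2 ^ (u1 - u2) * ((Hm (u1 - u2) (y2 - y1) : ℝ) : ℂ)
      + 2 * ((fun m : Fin N => (2 * Real.pi * I)⁻¹ *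
              circM r0 (-1) (2 * (β - y1)) (-u1 + (m : ℕ))) ⬝ᵥ
            (fun m : Fin N => (2 * Real.pi * I)⁻¹ *
              lineM c 1 (-2 * (β - y2)) (u2 - (m : ℕ) - 1))
        + ((fun m : Fin N => (2 * Real.pi * I)⁻¹ *
              circM r0 (-1) (2 * (β + y2)) (u2 - ρ + (m : ℕ))) -
            Φ *ᵥ (fun m : Fin N => (2 * Real.pi * I)⁻¹ *
              lineM c 1 (-2 * (β - y2)) (u2 - (m : ℕ) - 1))) ⬝ᵥ
          (R' *ᵥ ((fun m : Fin N => (2 * Real.pi * I)⁻¹ *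
              lineM c 1 (-2 * (β + y1)) (ρ - u1 - (m : ℕ) - 1)) -
            Ψ *ᵥ (fun m : Fin N => (2 * Real.pi * I)⁻¹ *
              circM r0 (-1) (2 * (β - y1)) (-u1 + (m : ℕ)))))) := by
  have hK : ∀ i j : Fin N, Kbeta r0 c β (-ρ + (i : ℕ)) (-ρ + (j : ℕ)) = (Ψ * Φ) i j := by
    intro i j
    rw [Kbeta_eq r0 c β h0 hrc _ _ N (by omega), hΦ, hΨ, Matrix.mul_apply]
    refine Finset.sum_congr rfl fun m _ => ?_
    simp only [of_apply]
    congr 3 <;> ring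
  have hK0 : ∀ (lam : ℤ) (j : ℕ), N ≤ j → Kbeta r0 c β lam (-ρ + j) = 0 := by
    intro lam j hj
    rw [Kbeta_eq r0 c β h0 hrc _ _ 0 (by simp; omega)]
    simp
  have hres' : ∀ (i : Fin N) (k : ℕ), R (-ρ + (i : ℕ)) (-ρ + k)
      - ∑ j : Fin N, (Ψ * Φ) i j * R (-ρ + (j : ℕ)) (-ρ + k) = if (i : ℕ) = k then 1 else 0 := by
    intro i k
    have := hres (-ρ + (i : ℕ)) (-ρ + k) (by omega) (by omega)
    rw [tsum_shift ρ (fun j => Kbeta r0 c β (-ρ + (i : ℕ)) j * R j (-ρ + k)) N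
      (fun j hj => by simp [hK0 _ j hj])] at this
    simp only [hK, add_right_inj, Nat.cast_inj] at this
    exact this
  have hinv : (1 - Ψ * Φ) * R' = 1 := by
    ext i k
    rw [sub_mul, one_mul, Matrix.sub_apply, Matrix.mul_apply, hR', Matrix.one_apply]
    simp only [of_apply]
    rw [hres' i k]
    simp only [Fin.ext_iff]
  have hR0 : ∀ (i : Fin N) (k : ℕ), N ≤ k → R (-ρ + (i : ℕ)) (-ρ + k) = 0 := by
    intro i k hk
    have hv : (1 - Ψ * Φ) *ᵥ (fun i : Fin N => R (-ρ + (i : ℕ)) (-ρ + k)) = 0 := by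
      rw [sub_mulVec, one_mulVec]
      ext i
      have := hres' i k
      rw [if_neg (by have := i.2; omega)] at this
      simpa [mulVec, dotProduct] using this
    have h2 := congrArg (fun v => R' *ᵥ v) hv
    simp only [mulVec_mulVec, mul_eq_one_comm.1 hinv, one_mulVec, mulVec_zero] at h2
    exact congrFun h2 i
  refine ⟨hinv, fun u1 u2 y1 y2 hu1 hu2 => ?_⟩
  have hA : ∀ i : Fin N, calA r0 c β (y1 - β) u1 (-ρ + (i : ℕ)) =
      ((fun m : Fin N => (2 * Real.pi * I)⁻¹ *
              lineM c 1 (-2 * (β + y1)) (ρ - u1 - (m : ℕ) - 1)) -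
            Ψ *ᵥ (fun m : Fin N => (2 * Real.pi * I)⁻¹ *
              circM r0 (-1) (2 * (β - y1)) (-u1 + (m : ℕ)))) i := by
    intro i
    rw [calA_eq r0 c β _ h0 hrc _ _ N hu1, hΨ]
    simp only [Pi.sub_apply, mulVec, dotProduct, of_apply]
    congr 1
    · congr 2
      · push_cast; ring
      · ring
    · refine Finset.sum_congr rfl fun m _ => ?_
      congr 3
      · ring
      · push_cast; ring
  have hB : ∀ i : Fin N, calB r0 c β (y2 - β) u2 (-ρ + (i : ℕ)) =
      ((fun m : Fin N => (2 * Real.pi * I)⁻¹ *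
              circM r0 (-1) (2 * (β + y2)) (u2 - ρ + (m : ℕ))) -
            Φ *ᵥ (fun m : Fin N => (2 * Real.pi * I)⁻¹ *
              lineM c 1 (-2 * (β - y2)) (u2 - (m : ℕ) - 1))) i := by
    intro i
    rw [calB_eq r0 c β _ h0 hrc _ _ N (by omega), hΦ]
    simp only [Pi.sub_apply, mulVec, dotProduct, of_apply]
    congr 1
    · congr 2
      · push_cast; ring
      · ring
    · refine Finset.sum_congr rfl fun m _ => ?_
      congr 3
      push_cast; ring
  have hB0 : ∀ i : ℕ, N ≤ i → calB r0 c β (y2 - β) u2 (-ρ + i) = 0 := by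
    intro i hi
    rw [calB_eq r0 c β _ h0 hrc _ _ 0 (by simp; omega), circM_zero h0 _ _ _ (by omega)]
    simp
  unfold Ktac
  rw [Kminor_eq r0 c h0 hrc _ _ _ _ N hu1, show β - y1 - (β - y2) = y2 - y1 by ring,
    tsum_shift ρ (fun lam => ∑' κ : {j : ℤ // -ρ ≤ j}, R lam κ * calA r0 c β (y1 - β) u1 κ *
      calB r0 c β (y2 - β) u2 lam) N (fun i hi => by simp [hB0 i hi]), add_assoc, ← mul_add]
  congr 3
  · simp only [dotProduct]
    refine Finset.sum_congr rfl fun m _ => ?_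
    push_cast
    rfl
  · simp only [dotProduct]
    refine Finset.sum_congr rfl fun i _ => ?_
    rw [tsum_shift ρ (fun κ => R (-ρ + (i : ℕ)) κ * calA r0 c β (y1 - β) u1 κ *
      calB r0 c β (y2 - β) u2 (-ρ + (i : ℕ))) N (fun k hk => by simp [hR0 i k hk]),
      ← Finset.sum_mul, hB i, mul_comm]
    congr 1
    rw [mulVec, dotProduct]
    refine Finset.sum_congr rfl fun k _ => ?_
    rw [hA k, hR']
    rfl

/-- The tacnode GUE-minor kernel is invariant under the involution
`(u1, y1, u2, y2) ↦ (ρ−u2, −y2, ρ−u1, −y1)`. -/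
theorem stmt11 (r0 c β : ℝ) (h0 : 0 < r0) (hrc : r0 < c) (ρ : ℤ)
    (R : ℤ → ℤ → ℂ)
    (hres : ∀ lam κ : ℤ, -ρ ≤ lam → -ρ ≤ κ →
      R lam κ - ∑' j : {j : ℤ // -ρ ≤ j}, Kbeta r0 c β lam (j : ℤ) * R (j : ℤ) κ
        = if lam = κ then 1 else 0)
    (u1 u2 : ℤ) (y1 y2 : ℝ) :
    Ktac r0 c β ρ R u1 y1 u2 y2 = Ktac r0 c β ρ R (ρ - u2) (-y2) (ρ - u1) (-y1) := by
  obtain ⟨N, hN⟩ : ∃ N : ℕ, N = ρ.natAbs + u1.natAbs + u2.natAbs := ⟨_, rfl⟩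
  obtain ⟨hinv, hK⟩ := Ktac_eq r0 c β h0 hrc ρ R hres N (by omega) _ _ _ rfl rfl rfl
  rw [hK u1 u2 y1 y2 (by omega) (by omega), hK (ρ - u2) (ρ - u1) (-y2) (-y1) (by omega) (by omega)]
  have e1 : ρ - u2 - (ρ - u1) = u1 - u2 := by ring
  have e2 : -y1 - -y2 = y2 - y1 := by ring
  have e3 : (ρ - u1 < ρ - u2) ↔ u2 < u1 := by omega
  have e4 : -(ρ - u2) = u2 - ρ := by ring
  have e5 : ρ - u1 - ρ = -u1 := by ring
  have e6 : ρ - (ρ - u2) = u2 := by ring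
  simp only [e1, e2, e3, e4, e5, e6, Complex.ofReal_neg, sub_neg_eq_add, ← sub_eq_add_neg]
  congr 2
  refine mat_identity _ _ _ ?_ ?_ hinv _ _ _ _
  · ext i j
    simp only [Matrix.transpose_apply, Matrix.of_apply]
    congr 2
    ring
  · ext i j
    simp only [Matrix.transpose_apply, Matrix.of_apply]
    congr 2
    ring
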